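/- Let T > 1/2, m > 0, and let M₁ < M₂ < 0 be two negative solutions of T²M³ − T(2−T)M² + (1−2T)M = m. Set q = −(2T−1)/(3T). Then M₁ < q < M₂ < 0, and |M₂ − q| > |M₁ − q|, i.e. M₂ − q > q − M₁. -/

import Mathlib

/-!
The left-hand side has derivative `(3TM + 2T - 1)(TM - 1)`, so it strictly increases up to `q` and
strictly decreases from `q` to `1/T > 0`; two solutions below `1/T` therefore lie on either side
of `q`. Since `q` is a critical point of a cubic, the reflection `q - h ↦ q + h` changes the value
only by the cubic term, which is positive. Hence the branch on the right of the peak lies above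
the mirror image of the left one, and a given level is reached farther from `q` on the right.
-/

open Set

section Peak

variable {α β : Type*} [LinearOrder α] [Preorder β] {f : α → β} {q r x y : α}

theorem lt_peak_and_peak_lt_of_eq (hmono : StrictMonoOn f (Iic q))
    (hanti : StrictAntiOn f (Icc q r)) (hxy : x < y) (hyr : y ≤ r) (hf : f x = f y) :
    x < q ∧ q < y := by
  constructor
  · by_contra! hqx
    exact (hanti ⟨hqx, hxy.le.trans hyr⟩ ⟨hqx.trans hxy.le, hyr⟩ hxy).ne' hf
  · by_contra! hyq
    exact (hmono (hxy.le.trans hyq) hyq hxy).ne hf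

theorem sub_lt_sub_of_eq_of_reflection_lt [AddCommGroup α] [IsOrderedAddMonoid α]
    (hmono : MonotoneOn f (Iic q)) (hqy : q ≤ y) (hrefl : f (q - (y - q)) < f y)
    (hf : f x = f y) : q - x < y - q := by
  by_contra! hle
  have hx : x ≤ q - (y - q) := le_sub_comm.mp hle
  have hq : q - (y - q) ≤ q := sub_le_self q (sub_nonneg.mpr hqy)
  exact ((hmono (hx.trans hq) hq hx).trans_lt hrefl).ne hf

end Peak

/-- The cubic polynomial function with critical points `q` and `r`, used as a normal form up to an
affine change of the values. The leading coefficient is `2`, which keeps the coefficients free of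
fractions. -/
def criticalCubic (q r x : ℝ) : ℝ :=
  2 * x ^ 3 - 3 * (q + r) * x ^ 2 + 6 * q * r * x

namespace criticalCubic

variable {q r x y h : ℝ}

theorem hasDerivAt (q r x : ℝ) :
    HasDerivAt (criticalCubic q r) (6 * (x - q) * (x - r)) x := by
  have hderiv := (((hasDerivAt_pow 3 x).const_mul 2).sub
    ((hasDerivAt_pow 2 x).const_mul (3 * (q + r)))).add
    ((hasDerivAt_id x).const_mul (6 * q * r))
  refine hderiv.congr_deriv ?_
  push_cast
  ring

theorem continuous (q r : ℝ) : Continuous (criticalCubic q r) :=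
  continuous_iff_continuousAt.mpr fun x ↦ (hasDerivAt q r x).continuousAt

theorem strictMonoOn_Iic (hqr : q ≤ r) : StrictMonoOn (criticalCubic q r) (Iic q) := by
  refine strictMonoOn_of_deriv_pos (convex_Iic q) (continuous q r).continuousOn fun x hx ↦ ?_
  rw [interior_Iic, mem_Iio] at hx
  rw [(hasDerivAt q r x).deriv]
  exact mul_pos_of_neg_of_neg (by linarith) (by linarith)

theorem strictAntiOn_Icc (q r : ℝ) : StrictAntiOn (criticalCubic q r) (Icc q r) := by
  refine strictAntiOn_of_deriv_neg (convex_Icc q r) (continuous q r).continuousOn fun x hx ↦ ?_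
  rw [interior_Icc, mem_Ioo] at hx
  rw [(hasDerivAt q r x).deriv]
  exact mul_neg_of_pos_of_neg (by linarith) (by linarith)

theorem apply_add_eq (q r h : ℝ) :
    criticalCubic q r (q + h) = criticalCubic q r (q - h) + 4 * h ^ 3 := by
  simp only [criticalCubic]
  ring

theorem apply_sub_lt_apply_add (q r : ℝ) (hh : 0 < h) :
    criticalCubic q r (q - h) < criticalCubic q r (q + h) := by
  rw [apply_add_eq]
  exact lt_add_of_pos_right _ (by positivity)

theorem lt_and_lt_and_sub_lt_sub_of_eq (hqr : q ≤ r) (hxy : x < y) (hyr : y ≤ r)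
    (heq : criticalCubic q r x = criticalCubic q r y) :
    x < q ∧ q < y ∧ q - x < y - q := by
  have hmono := strictMonoOn_Iic hqr
  obtain ⟨hxq, hqy⟩ := lt_peak_and_peak_lt_of_eq hmono (strictAntiOn_Icc q r) hxy hyr heq
  have hrefl : criticalCubic q r (q - (y - q)) < criticalCubic q r y := by
    simpa only [add_sub_cancel] using apply_sub_lt_apply_add q r (sub_pos.mpr hqy)
  exact ⟨hxq, hqy, sub_lt_sub_of_eq_of_reflection_lt hmono.monotoneOn hqy.le hrefl heq⟩

end criticalCubic

theorem consistency_cubic_eq_criticalCubic {T : ℝ} (hT : T ≠ 0) (M : ℝ) :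
    T ^ 2 * M ^ 3 - T * (2 - T) * M ^ 2 + (1 - 2 * T) * M =
      T ^ 2 / 2 * criticalCubic (-(2 * T - 1) / (3 * T)) (1 / T) M := by
  simp only [criticalCubic]
  field_simp
  ring

theorem stmt_16_general {T m M1 M2 : ℝ} (hT : 0 < T) (h12 : M1 < M2) (hM2le : M2 ≤ 1 / T)
    (hM1 : T ^ 2 * M1 ^ 3 - T * (2 - T) * M1 ^ 2 + (1 - 2 * T) * M1 = m)
    (hM2 : T ^ 2 * M2 ^ 3 - T * (2 - T) * M2 ^ 2 + (1 - 2 * T) * M2 = m) :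
    M1 < -(2 * T - 1) / (3 * T) ∧ -(2 * T - 1) / (3 * T) < M2 ∧
      -(2 * T - 1) / (3 * T) - M1 < M2 - -(2 * T - 1) / (3 * T) := by
  have hcritical : -(2 * T - 1) / (3 * T) ≤ 1 / T := by
    have hgap : 1 / T - -(2 * T - 1) / (3 * T) = 2 * (T + 1) / (3 * T) := by
      field_simp
      ring
    exact sub_nonneg.mp (hgap ▸ by positivity)
  have hlevel := hM1.trans hM2.symm
  rw [consistency_cubic_eq_criticalCubic hT.ne',
    consistency_cubic_eq_criticalCubic hT.ne'] at hlevel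
  exact criticalCubic.lt_and_lt_and_sub_lt_sub_of_eq hcritical h12 hM2le
    (mul_left_cancel₀ (by positivity) hlevel)

/-- Let `T > 1/2`, `m > 0`, and `M₁ < M₂ < 0` two negative solutions of
`T²M³ − T(2−T)M² + (1−2T)M = m`. With `q = −(2T−1)/(3T)` one has
`M₁ < q < M₂ < 0` and `|M₂ − q| > |M₁ − q|`, i.e. `M₂ − q > q − M₁`. -/
theorem stmt_16 (T m M1 M2 : ℝ) (hT : 1/2 < T) (hm : 0 < m)
    (h12 : M1 < M2) (hM2neg : M2 < 0)
    (hM1 : T^2 * M1^3 - T*(2 - T) * M1^2 + (1 - 2*T) * M1 = m)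
    (hM2 : T^2 * M2^3 - T*(2 - T) * M2^2 + (1 - 2*T) * M2 = m) :
    M1 < -(2*T - 1)/(3*T) ∧ -(2*T - 1)/(3*T) < M2 ∧
    (-(2*T - 1)/(3*T)) - M1 < M2 - (-(2*T - 1)/(3*T)) := by
  have hTpos : 0 < T := by linarith
  exact stmt_16_general hTpos h12 (hM2neg.le.trans (by positivity)) hM1 hM2
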